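/- Let k be an algebraically closed field of characteristic 0, let n ≥ 3 be an integer, and let q be a nondegenerate quadratic form on V = k^{n+2} with polar bilinear form B_q. Consider the diagonal action of SO(q) on Q × Q, where Q = {[y] ∈ ℙ(V) : q(y) = 0} is the projective quadric. Let Δ ⊂ Q × Q be the diagonal and T = {([x],[y]) ∈ Q × Q : B_q(x,y) = 0} (note Δ ⊆ T since B_q(x,x) = 2q(x) = 0). Then the orbits of the diagonal SO(q)-action on Q × Q are exactly the three sets Δ, T ∖ Δ, and (Q × Q) ∖ T. -/

import Mathlib

open QuadraticMap

/-- The orbit of a pair of projective points under the diagonal action of `SO(q)`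
(the determinant-one linear automorphisms preserving the quadratic form `q`). -/
def pairOrbit {k : Type*} [Field k] {N : ℕ}
    (q : QuadraticForm k (Fin N → k))
    (z : Projectivization k (Fin N → k) × Projectivization k (Fin N → k)) :
    Set (Projectivization k (Fin N → k) × Projectivization k (Fin N → k)) :=
  {z' | ∃ f : (Fin N → k) ≃ₗ[k] (Fin N → k),
      (∀ v, q (f v) = q v) ∧
      LinearMap.det (f : (Fin N → k) →ₗ[k] (Fin N → k)) = 1 ∧
      (Projectivization.map (f : (Fin N → k) →ₗ[k] (Fin N → k)) f.injective z.1,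
       Projectivization.map (f : (Fin N → k) →ₗ[k] (Fin N → k)) f.injective z.2) = z'}

/-!
For isotropic `z` and `w ⊥ z`, the Eichler transformation
`v ↦ v + B(z,v)(w - q(w)z) - B(w,v)z` lies in `SO(q)` and fixes `z`. If `q(u) = q(v)` and
`B(z,u) = B(z,v) ≠ 0`, then `w = (v - u) / B(z,u)` makes it carry `u` to `v` while fixing every
vector orthogonal to both `z` and `v - u`. With `z` on the line `p`, this shows that the stabilizer
of a point `p` of `Q` is transitive on the points of `Q` not orthogonal to `p`.

For the other two transitivity statements, let `y, y' ∈ Uᗮ` span isotropic lines not contained in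
`U`. If `dim V > 2 dim U + 2`, some isotropic `z ∈ Uᗮ` is orthogonal to neither, and after scaling
`y'` the same transformation carries `y` to it and fixes `U` pointwise. With `U = 0` this is
transitivity on `Q`; with `U` the line `p` it is transitivity of the stabilizer of `p` on the other
points of the tangent space at `p`, and this is where `dim V ≥ 5` is needed.
-/

open LinearMap (BilinForm)
open Module MulAction
open scoped LinearAlgebra.Projectivization

section SpecialOrthogonalGroup

variable {R M : Type*} [CommRing R] [AddCommGroup M] [Module R M]

lemma polarBilin_isRefl (q : QuadraticForm R M) : (polarBilin q).IsRefl := fun u v h ↦ by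
  simpa [polar_comm q v u] using h

/-- The special orthogonal group `SO(q)`, as a subgroup of the linear automorphisms so that it
acts on vectors and on the projective space. It is cut out by `det = 1`, which in characteristic `2`
does not separate it from the full orthogonal group when `q` is nondegenerate. -/
def specialOrthogonalGroup (q : QuadraticForm R M) : Subgroup (M ≃ₗ[R] M) where
  carrier := {g | (∀ v, q (g v) = q v) ∧ LinearEquiv.det g = 1}
  one_mem' := ⟨fun _ ↦ rfl, map_one _⟩
  mul_mem' {g h} hg hh :=
    ⟨fun v ↦ (hg.1 (h v)).trans (hh.1 v), by rw [map_mul, hg.2, hh.2, one_mul]⟩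
  inv_mem' {g} hg :=
    ⟨fun v ↦ by simpa using (hg.1 (g⁻¹ v)).symm, by rw [map_inv, hg.2, inv_one]⟩

variable {q : QuadraticForm R M} {z w u v : M}

lemma polar_apply_apply_of_mem_specialOrthogonalGroup {g : M ≃ₗ[R] M}
    (hg : g ∈ specialOrthogonalGroup q) (u v : M) : polar q (g u) (g v) = polar q u v := by
  simp only [polar, ← map_add, hg.1]

/-- The Eichler transformation (or Siegel transvection) attached to an isotropic vector `z` and a
vector `w` orthogonal to it. It is encoded as a product of two transvections, which makes its
determinant visible. -/
def eichler (hz : q z = 0) (hzw : polar q z w = 0) : M ≃ₗ[R] M :=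
  LinearEquiv.transvection (f := polarBilin q z) (v := w - q w • z)
      (by simp [polar_self, hz, hzw]) *
    LinearEquiv.transvection (f := polarBilin q w) (v := -z) (by simp [polar_comm q w z, hzw])

lemma eichler_apply (hz : q z = 0) (hzw : polar q z w = 0) (v : M) :
    eichler hz hzw v = v + polar q z v • (w - q w • z) - polar q w v • z := by
  simp only [eichler, LinearEquiv.mul_apply, LinearEquiv.transvection.apply,
    polarBilin_apply_apply, polar_add_right, polar_smul_right, polar_neg_right, polar_self, hz,
    smul_zero, neg_zero, add_zero]
  module

lemma map_eichler (hz : q z = 0) (hzw : polar q z w = 0) (v : M) :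
    q (eichler hz hzw v) = q v := by
  have h : eichler hz hzw v =
      polar q z v • w + (-(polar q z v * q w + polar q w v)) • z + v := by
    rw [eichler_apply]
    module
  simp only [h, QuadraticMap.map_add q, QuadraticMap.map_smul, polar_add_left, polar_smul_left,
    polar_smul_right, polar_comm q w z, hz, hzw, smul_eq_mul]
  ring

lemma eichler_mem_specialOrthogonalGroup (hz : q z = 0) (hzw : polar q z w = 0) :
    eichler hz hzw ∈ specialOrthogonalGroup q :=
  ⟨map_eichler hz hzw, by
    rw [eichler, map_mul, LinearEquiv.transvection.det_eq_one,
      LinearEquiv.transvection.det_eq_one, one_mul]⟩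

lemma eichler_apply_of_polar_eq_zero (hz : q z = 0) (hzw : polar q z w = 0)
    (hzv : polar q z v = 0) (hwv : polar q w v = 0) : eichler hz hzw v = v := by
  simp [eichler_apply, hzv, hwv]

end SpecialOrthogonalGroup

section VectorSpace

variable {k V : Type*} [Field k] [AddCommGroup V] [Module k V] {q : QuadraticForm k V}

lemma exists_mem_specialOrthogonalGroup_apply_eq {z u v : V} (hz : q z = 0) (huv : q u = q v)
    (hzuv : polar q z u = polar q z v) (hzu : polar q z u ≠ 0) :
    ∃ g ∈ specialOrthogonalGroup q, g u = v ∧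
      ∀ x, polar q z x = 0 → polar q u x = polar q v x → g x = x := by
  set c := polar q z u with hc
  have hzw : polar q z (c⁻¹ • (v - u)) = 0 := by
    simp [polar_smul_right, polar_sub_right, ← hzuv, ← hc]
  refine ⟨eichler hz hzw, eichler_mem_specialOrthogonalGroup hz hzw, ?_, fun x hzx hx ↦ ?_⟩
  · have hqw : c * q (c⁻¹ • (v - u)) = -polar q (c⁻¹ • (v - u)) u := by
      simp only [QuadraticMap.map_smul, sub_eq_add_neg, QuadraticMap.map_add q,
        QuadraticMap.map_neg, polar_smul_left, polar_add_left, polar_neg_left, polar_neg_right,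
        polar_self, smul_eq_mul, huv]
      field_simp
      ring
    rw [eichler_apply, ← hc, smul_sub, smul_smul c (q _), hqw, smul_inv_smul₀ hzu]
    module
  · refine eichler_apply_of_polar_eq_zero hz hzw hzx ?_
    rw [polar_smul_left, polar_sub_left, hx, sub_self, smul_zero]

section Orthogonal

variable [FiniteDimensional k V] (hq : (polarBilin q).Nondegenerate)
include hq

lemma exists_mem_orthogonal_map_ne_zero {S : Submodule k V}
    (hS : finrank k S + finrank k (S ⊓ BilinForm.orthogonal (polarBilin q) S : Submodule k V)
      < finrank k V) :
    ∃ w ∈ BilinForm.orthogonal (polarBilin q) S, q w ≠ 0 := by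
  by_contra! hzero
  have hle : BilinForm.orthogonal (polarBilin q) S ≤ S := fun u hu ↦ by
    rw [← BilinForm.orthogonal_orthogonal hq (polarBilin_isRefl q) S]
    intro w hw
    simpa [QuadraticMap.map_add q, hzero u hu, hzero w hw] using hzero _ (add_mem hw hu)
  rw [inf_eq_right.2 hle, BilinForm.finrank_orthogonal hq] at hS
  have := S.finrank_le
  lia

lemma exists_mem_orthogonal_polar_ne_zero {U : Submodule k V} {y : V} (hy : y ∉ U) :
    ∃ c ∈ BilinForm.orthogonal (polarBilin q) U, polar q y c ≠ 0 := by
  by_contra! h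
  refine hy ?_
  rw [← BilinForm.orthogonal_orthogonal hq (polarBilin_isRefl q) U]
  exact fun c hc ↦ (polar_comm q c y).trans (h c hc)

lemma exists_mem_orthogonal_polar_ne_zero_polar_ne_zero {U : Submodule k V} {y y' : V}
    (hy : y ∉ U) (hy' : y' ∉ U) :
    ∃ c ∈ BilinForm.orthogonal (polarBilin q) U, polar q y c ≠ 0 ∧ polar q y' c ≠ 0 := by
  obtain ⟨a, ha, hya⟩ := exists_mem_orthogonal_polar_ne_zero hq hy
  obtain ⟨b, hb, hyb⟩ := exists_mem_orthogonal_polar_ne_zero hq hy'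
  by_cases hya' : polar q y' a = 0
  · by_cases hyb' : polar q y b = 0
    · exact ⟨a + b, add_mem ha hb, by simpa [polar_add_right, hyb'] using hya,
        by simpa [polar_add_right, hya'] using hyb⟩
    · exact ⟨b, hb, hyb', hyb⟩
  · exact ⟨a, ha, hya, hya'⟩

end Orthogonal

lemma finrank_sup_span_pair_le [FiniteDimensional k V] (U : Submodule k V) (x y : V) :
    finrank k (U ⊔ Submodule.span k {x, y} : Submodule k V) ≤ finrank k U + 2 := by
  classical
  have hpair : finrank k (Submodule.span k {x, y}) ≤ ({x, y} : Finset V).card := by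
    rw [← Finset.coe_pair]
    exact finrank_span_finset_le_card _
  have hsup := Submodule.finrank_add_le_finrank_add_finrank U (Submodule.span k {x, y})
  have hcard : ({x, y} : Finset V).card ≤ 2 := Finset.card_le_two
  lia

lemma sup_span_pair_inf_orthogonal_le {U : Submodule k V} {y y' : V} (hy : q y = 0)
    (hy' : q y' = 0) (hyU : y ∈ BilinForm.orthogonal (polarBilin q) U)
    (hyU' : y' ∈ BilinForm.orthogonal (polarBilin q) U) (hyy' : polar q y y' ≠ 0) :
    (U ⊔ Submodule.span k {y, y'}) ⊓
      BilinForm.orthogonal (polarBilin q) (U ⊔ Submodule.span k {y, y'}) ≤ U := by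
  rintro w ⟨hwS, hwS'⟩
  obtain ⟨u, hu, _, hv, rfl⟩ := Submodule.mem_sup.1 hwS
  obtain ⟨a, b, rfl⟩ := Submodule.mem_span_pair.1 hv
  have huy : polar q y u = 0 := (polar_comm q y u).trans (hyU u hu)
  have huy' : polar q y' u = 0 := (polar_comm q y' u).trans (hyU' u hu)
  have hb : polar q y (u + (a • y + b • y')) = 0 :=
    hwS' y (Submodule.mem_sup_right (Submodule.subset_span (by simp)))
  have ha : polar q y' (u + (a • y + b • y')) = 0 :=
    hwS' y' (Submodule.mem_sup_right (Submodule.subset_span (by simp)))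
  have hb0 : b = 0 := by
    simpa [polar_add_right, polar_smul_right, polar_self, huy, hy, hyy'] using hb
  have ha0 : a = 0 := by
    simpa [polar_add_right, polar_smul_right, polar_self, huy', hy', polar_comm q y' y, hyy']
      using ha
  simpa [ha0, hb0] using hu

lemma exists_isotropic_mem_orthogonal_polar_ne_zero [FiniteDimensional k V]
    (hq : (polarBilin q).Nondegenerate) {U : Submodule k V}
    (hU : 2 * finrank k U + 2 < finrank k V) {y y' : V} (hy : q y = 0) (hy' : q y' = 0)
    (hyU : y ∈ BilinForm.orthogonal (polarBilin q) U)
    (hyU' : y' ∈ BilinForm.orthogonal (polarBilin q) U) (hyU₀ : y ∉ U) (hyU₀' : y' ∉ U) :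
    ∃ z ∈ BilinForm.orthogonal (polarBilin q) U,
      q z = 0 ∧ polar q z y ≠ 0 ∧ polar q z y' ≠ 0 := by
  by_cases hyy' : polar q y y' = 0
  · obtain ⟨c, hcU, hyc, hyc'⟩ :=
      exists_mem_orthogonal_polar_ne_zero_polar_ne_zero hq hyU₀ hyU₀'
    rw [polar_comm] at hyc hyc'
    refine ⟨c + (-(q c / polar q c y)) • y, add_mem hcU (Submodule.smul_mem _ _ hyU), ?_, ?_, ?_⟩
    · simp [QuadraticMap.map_add q, QuadraticMap.map_smul, polar_smul_right, hy, hyc]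
    · simpa [polar_add_left, polar_smul_left, polar_self, hy] using hyc
    · simpa [polar_add_left, polar_smul_left, hyy'] using hyc'
  · obtain ⟨w, hwS, hw⟩ := exists_mem_orthogonal_map_ne_zero hq
      (S := U ⊔ Submodule.span k {y, y'}) (by
        have hdim := finrank_sup_span_pair_le U y y'
        have hrad := Submodule.finrank_mono (sup_span_pair_inf_orthogonal_le hy hy' hyU hyU' hyy')
        lia)
    have hwU : w ∈ BilinForm.orthogonal (polarBilin q) U :=
      BilinForm.orthogonal_le le_sup_left hwS
    have hyw : polar q y w = 0 :=
      hwS y (Submodule.mem_sup_right (Submodule.subset_span (by simp)))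
    have hyw' : polar q y' w = 0 :=
      hwS y' (Submodule.mem_sup_right (Submodule.subset_span (by simp)))
    refine ⟨y + ((-(q w / polar q y y')) • y' + w),
      add_mem hyU (add_mem (Submodule.smul_mem _ _ hyU') hwU), ?_, ?_, ?_⟩
    · simp [QuadraticMap.map_add q, QuadraticMap.map_smul, polar_add_right, polar_smul_right,
        polar_smul_left, hy, hy', hyw, hyw', hyy']
    · simp [polar_add_left, polar_smul_left, polar_self, hy, polar_comm q y' y,
        polar_comm q w y, hyw, hyy', hw]
    · simp [polar_add_left, polar_smul_left, polar_self, hy', polar_comm q w y', hyw', hyy']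

lemma exists_mem_specialOrthogonalGroup_fixing_apply_eq_smul [FiniteDimensional k V]
    (hq : (polarBilin q).Nondegenerate) {U : Submodule k V}
    (hU : 2 * finrank k U + 2 < finrank k V) {y y' : V} (hy : q y = 0) (hy' : q y' = 0)
    (hyU : y ∈ BilinForm.orthogonal (polarBilin q) U)
    (hyU' : y' ∈ BilinForm.orthogonal (polarBilin q) U) (hyU₀ : y ∉ U) (hyU₀' : y' ∉ U) :
    ∃ g ∈ specialOrthogonalGroup q, (∀ u ∈ U, g u = u) ∧ ∃ c : k, g y = c • y' := by
  obtain ⟨z, hzU, hz, hzy, hzy'⟩ :=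
    exists_isotropic_mem_orthogonal_polar_ne_zero hq hU hy hy' hyU hyU' hyU₀ hyU₀'
  obtain ⟨g, hg, hgy, hfix⟩ := exists_mem_specialOrthogonalGroup_apply_eq hz
    (v := (polar q z y / polar q z y') • y') (by simp [QuadraticMap.map_smul, hy, hy'])
    (by simp [polar_smul_right, hzy']) hzy
  have hperp {v u : V} (hv : v ∈ BilinForm.orthogonal (polarBilin q) U) (hu : u ∈ U) :
      polar q v u = 0 := (polar_comm q v u).trans (hv u hu)
  exact ⟨g, hg, fun u hu ↦ hfix u (hperp hzU hu)
    (by rw [polar_smul_left, hperp hyU hu, hperp hyU' hu, smul_zero]), _, hgy⟩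

end VectorSpace

section Projectivization

variable {k V : Type*} [Field k] [AddCommGroup V] [Module k V] {q : QuadraticForm k V}

lemma exists_rep_smul_eq (g : V ≃ₗ[k] V) (p : ℙ k V) :
    ∃ a : k, a ≠ 0 ∧ (g • p).rep = a • g p.rep := by
  have hne : g p.rep ≠ 0 := by simpa using p.rep_nonzero
  have h : g • p = .mk k (g p.rep) hne := by
    conv_lhs => rw [← p.mk_rep, Projectivization.smul_mk]
    rfl
  obtain ⟨a, ha⟩ := Projectivization.exists_smul_eq_mk_rep k _ hne
  exact ⟨a, a.ne_zero, by rw [h, ← ha]; rfl⟩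

lemma smul_eq_of_apply_rep_eq_smul {g : V ≃ₗ[k] V} {p p' : ℙ k V} {c : k}
    (h : g p.rep = c • p'.rep) : g • p = p' := by
  conv_lhs => rw [← p.mk_rep]
  conv_rhs => rw [← p'.mk_rep]
  rw [Projectivization.smul_mk, Projectivization.mk_eq_mk_iff']
  exact ⟨c, h.symm⟩

lemma rep_mem_span_rep_iff {p p' : ℙ k V} : p'.rep ∈ k ∙ p.rep ↔ p = p' := by
  rw [Submodule.mem_span_singleton, ← Projectivization.mk_eq_mk_iff' k _ _ p'.rep_nonzero
    p.rep_nonzero, p.mk_rep, p'.mk_rep, eq_comm]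

/-- The projective quadric `Q = {q = 0}`; the condition does not depend on the representative. -/
def quadric (q : QuadraticForm k V) : Set (ℙ k V) := {p | q p.rep = 0}

/-- The diagonal `Δ` of `Q × Q`, as a set of pairs of points of the ambient projective space. -/
def quadricDiagonal (q : QuadraticForm k V) : Set (ℙ k V × ℙ k V) :=
  {z | z.1 ∈ quadric q ∧ z.1 = z.2}

/-- The set `T` of the pairs `(p, r)` of points of `Q` such that `r` lies in the projective tangent
space of `Q` at `p`. -/
def tangentPairs (q : QuadraticForm k V) : Set (ℙ k V × ℙ k V) :=
  {z | z.1 ∈ quadric q ∧ z.2 ∈ quadric q ∧ polar q z.1.rep z.2.rep = 0}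

lemma quadricDiagonal_subset_tangentPairs (q : QuadraticForm k V) :
    quadricDiagonal q ⊆ tangentPairs q := by
  rintro ⟨p, r⟩ ⟨hp, rfl : p = r⟩
  exact ⟨hp, hp, by rw [polar_self, show q p.rep = 0 from hp, smul_zero]⟩

lemma tangentPairs_subset_quadric_prod (q : QuadraticForm k V) :
    tangentPairs q ⊆ quadric q ×ˢ quadric q := fun _ hz ↦ ⟨hz.1, hz.2.1⟩

section Invariance

variable (g : specialOrthogonalGroup q)

lemma smul_mem_quadric_iff {p : ℙ k V} : g • p ∈ quadric q ↔ p ∈ quadric q := by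
  obtain ⟨a, ha, h⟩ := exists_rep_smul_eq g.1 p
  change q (g.1 • p).rep = 0 ↔ q p.rep = 0
  simp [h, QuadraticMap.map_smul, g.2.1, ha]

lemma polar_rep_smul_eq_zero_iff {p r : ℙ k V} :
    polar q (g • p).rep (g • r).rep = 0 ↔ polar q p.rep r.rep = 0 := by
  obtain ⟨a, ha, h⟩ := exists_rep_smul_eq g.1 p
  obtain ⟨b, hb, h'⟩ := exists_rep_smul_eq g.1 r
  change polar q (g.1 • p).rep (g.1 • r).rep = 0 ↔ _
  simp [h, h', polar_smul_left, polar_smul_right,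
    polar_apply_apply_of_mem_specialOrthogonalGroup g.2, ha, hb]

lemma smul_mem_quadricDiagonal_iff {z : ℙ k V × ℙ k V} :
    g • z ∈ quadricDiagonal q ↔ z ∈ quadricDiagonal q :=
  and_congr (smul_mem_quadric_iff g) (smul_left_cancel_iff g)

lemma smul_mem_tangentPairs_iff {z : ℙ k V × ℙ k V} :
    g • z ∈ tangentPairs q ↔ z ∈ tangentPairs q :=
  and_congr (smul_mem_quadric_iff g)
    (and_congr (smul_mem_quadric_iff g) (polar_rep_smul_eq_zero_iff g))

lemma smul_mem_quadric_prod_iff {z : ℙ k V × ℙ k V} :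
    g • z ∈ quadric q ×ˢ quadric q ↔ z ∈ quadric q ×ˢ quadric q :=
  and_congr (smul_mem_quadric_iff g) (smul_mem_quadric_iff g)

end Invariance

lemma mem_orbit_of_mem_quadric [FiniteDimensional k V] (hq : (polarBilin q).Nondegenerate)
    (hV : 3 ≤ finrank k V) {p p' : ℙ k V} (hp : p ∈ quadric q) (hp' : p' ∈ quadric q) :
    p' ∈ orbit (specialOrthogonalGroup q) p := by
  obtain ⟨g, hg, -, c, hc⟩ := exists_mem_specialOrthogonalGroup_fixing_apply_eq_smul hq (U := ⊥)
    (by rw [finrank_bot]; lia) hp hp' (by simp) (by simp) (by simpa using p.rep_nonzero)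
    (by simpa using p'.rep_nonzero)
  exact ⟨⟨g, hg⟩, smul_eq_of_apply_rep_eq_smul hc⟩

lemma exists_smul_eq_self_smul_eq_of_polar_eq_zero [FiniteDimensional k V]
    (hq : (polarBilin q).Nondegenerate) (hV : 5 ≤ finrank k V) {p r r' : ℙ k V}
    (hr : r ∈ quadric q) (hr' : r' ∈ quadric q) (hpr : polar q p.rep r.rep = 0)
    (hpr' : polar q p.rep r'.rep = 0) (hne : p ≠ r) (hne' : p ≠ r') :
    ∃ g : specialOrthogonalGroup q, g • p = p ∧ g • r = r' := by
  have mem_orthogonal {v : V} (hv : polar q p.rep v = 0) :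
      v ∈ BilinForm.orthogonal (polarBilin q) (k ∙ p.rep) := fun u hu ↦ by
    obtain ⟨a, rfl⟩ := Submodule.mem_span_singleton.1 hu
    simp [hv]
  obtain ⟨g, hg, hfix, c, hc⟩ := exists_mem_specialOrthogonalGroup_fixing_apply_eq_smul hq
    (by rw [finrank_span_singleton p.rep_nonzero]; lia) hr hr' (mem_orthogonal hpr)
    (mem_orthogonal hpr') (rep_mem_span_rep_iff.not.2 hne) (rep_mem_span_rep_iff.not.2 hne')
  refine ⟨⟨g, hg⟩, smul_eq_of_apply_rep_eq_smul (c := 1) ?_, smul_eq_of_apply_rep_eq_smul hc⟩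
  rw [hfix _ (Submodule.mem_span_singleton_self _), one_smul]

lemma exists_smul_eq_self_smul_eq_of_polar_ne_zero {p r r' : ℙ k V} (hp : p ∈ quadric q)
    (hr : r ∈ quadric q) (hr' : r' ∈ quadric q) (hpr : polar q p.rep r.rep ≠ 0)
    (hpr' : polar q p.rep r'.rep ≠ 0) :
    ∃ g : specialOrthogonalGroup q, g • p = p ∧ g • r = r' := by
  obtain ⟨g, hg, hgr, hfix⟩ := exists_mem_specialOrthogonalGroup_apply_eq hp
    (v := (polar q p.rep r.rep / polar q p.rep r'.rep) • r'.rep)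
    (by simp [QuadraticMap.map_smul, show q r.rep = 0 from hr, show q r'.rep = 0 from hr'])
    (by simp [polar_smul_right, hpr']) hpr
  refine ⟨⟨g, hg⟩, smul_eq_of_apply_rep_eq_smul (c := 1) ?_, smul_eq_of_apply_rep_eq_smul hgr⟩
  rw [one_smul]
  refine hfix _ ?_ ?_
  · rw [polar_self, show q p.rep = 0 from hp, smul_zero]
  · simp [polar_comm q _ p.rep, hpr']

end Projectivization

lemma orbit_eq_of_fiberwise_transitive {G α β : Type*} [Group G] [MulAction G α] [MulAction G β]
    {s : Set (α × β)} (hs : ∀ (g : G), ∀ z ∈ s, g • z ∈ s)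
    (hfst : ∀ z ∈ s, ∀ z' ∈ s, z'.1 ∈ orbit G z.1)
    (hsnd : ∀ a b b', (a, b) ∈ s → (a, b') ∈ s → ∃ g : G, g • a = a ∧ g • b = b')
    {z : α × β} (hz : z ∈ s) : orbit G z = s := by
  refine Set.Subset.antisymm (by rintro _ ⟨g, rfl⟩; exact hs g z hz) fun ⟨a, b⟩ hz' ↦ ?_
  obtain ⟨g, rfl : g • z.1 = a⟩ := hfst z hz _ hz'
  obtain ⟨h, ha, rfl⟩ := hsnd _ (g • z.2) b (hs g z hz) hz'
  exact ⟨h * g, Prod.ext ((mul_smul h g z.1).trans ha) (mul_smul h g z.2)⟩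

section Orbits

variable {k V : Type*} [Field k] [AddCommGroup V] [Module k V] [FiniteDimensional k V]
  {q : QuadraticForm k V} (hq : (polarBilin q).Nondegenerate) {z : ℙ k V × ℙ k V}
include hq

lemma orbit_eq_quadricDiagonal (hV : 3 ≤ finrank k V) (hz : z ∈ quadricDiagonal q) :
    orbit (specialOrthogonalGroup q) z = quadricDiagonal q := by
  refine orbit_eq_of_fiberwise_transitive (fun g _ ↦ (smul_mem_quadricDiagonal_iff g).2)
    (fun z hz z' hz' ↦ mem_orbit_of_mem_quadric hq hV hz.1 hz'.1) ?_ hz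
  rintro p r r' ⟨-, rfl : p = r⟩ ⟨-, rfl : p = r'⟩
  exact ⟨1, one_smul _ _, one_smul _ _⟩

lemma orbit_eq_tangentPairs_diff_quadricDiagonal (hV : 5 ≤ finrank k V)
    (hz : z ∈ tangentPairs q \ quadricDiagonal q) :
    orbit (specialOrthogonalGroup q) z = tangentPairs q \ quadricDiagonal q := by
  refine orbit_eq_of_fiberwise_transitive
    (fun g _ ↦ ((smul_mem_tangentPairs_iff g).and (smul_mem_quadricDiagonal_iff g).not).2)
    (fun z hz z' hz' ↦ mem_orbit_of_mem_quadric hq (by lia) hz.1.1 hz'.1.1) ?_ hz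
  rintro p r r' ⟨⟨hp, hr, hpr⟩, hne⟩ ⟨⟨-, hr', hpr'⟩, hne'⟩
  exact exists_smul_eq_self_smul_eq_of_polar_eq_zero hq hV hr hr' hpr hpr'
    (fun h ↦ hne ⟨hp, h⟩) (fun h ↦ hne' ⟨hp, h⟩)

lemma orbit_eq_quadric_prod_diff_tangentPairs (hV : 3 ≤ finrank k V)
    (hz : z ∈ (quadric q ×ˢ quadric q) \ tangentPairs q) :
    orbit (specialOrthogonalGroup q) z = (quadric q ×ˢ quadric q) \ tangentPairs q := by
  refine orbit_eq_of_fiberwise_transitive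
    (fun g _ ↦ ((smul_mem_quadric_prod_iff g).and (smul_mem_tangentPairs_iff g).not).2)
    (fun z hz z' hz' ↦ mem_orbit_of_mem_quadric hq hV hz.1.1 hz'.1.1) ?_ hz
  rintro p r r' ⟨⟨hp, hr⟩, hT⟩ ⟨⟨-, hr'⟩, hT'⟩
  exact exists_smul_eq_self_smul_eq_of_polar_ne_zero hp hr hr'
    (fun h ↦ hT ⟨hp, hr, h⟩) (fun h ↦ hT' ⟨hp, hr', h⟩)

end Orbits

theorem stmt1_general {k V : Type*} [Field k] [AddCommGroup V] [Module k V]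
    [FiniteDimensional k V] {q : QuadraticForm k V} (hq : (polarBilin q).Nondegenerate)
    (hV : 5 ≤ finrank k V) :
    quadricDiagonal q ⊆ tangentPairs q ∧
    (∀ z ∈ quadricDiagonal q, orbit (specialOrthogonalGroup q) z = quadricDiagonal q) ∧
    (∀ z ∈ tangentPairs q \ quadricDiagonal q,
      orbit (specialOrthogonalGroup q) z = tangentPairs q \ quadricDiagonal q) ∧
    (∀ z ∈ (quadric q ×ˢ quadric q) \ tangentPairs q,
      orbit (specialOrthogonalGroup q) z = (quadric q ×ˢ quadric q) \ tangentPairs q) ∧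
    quadric q ×ˢ quadric q = quadricDiagonal q ∪ (tangentPairs q \ quadricDiagonal q) ∪
      ((quadric q ×ˢ quadric q) \ tangentPairs q) := by
  refine ⟨quadricDiagonal_subset_tangentPairs q,
    fun _ ↦ orbit_eq_quadricDiagonal hq (by lia),
    fun _ ↦ orbit_eq_tangentPairs_diff_quadricDiagonal hq hV,
    fun _ ↦ orbit_eq_quadric_prod_diff_tangentPairs hq (by lia), ?_⟩
  rw [Set.union_sdiff_cancel (quadricDiagonal_subset_tangentPairs q),
    Set.union_sdiff_cancel (tangentPairs_subset_quadric_prod q)]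

lemma pairOrbit_eq_orbit {k : Type*} [Field k] {N : ℕ} (q : QuadraticForm k (Fin N → k))
    (z : ℙ k (Fin N → k) × ℙ k (Fin N → k)) :
    pairOrbit q z = orbit (specialOrthogonalGroup q) z := by
  ext z'
  constructor
  · rintro ⟨f, hf, hdet, h⟩
    exact ⟨⟨f, hf, Units.ext ((LinearEquiv.coe_det f).trans hdet)⟩, h⟩
  · rintro ⟨⟨f, hf, hdet⟩, h⟩
    exact ⟨f, hf, (LinearEquiv.coe_det f).symm.trans (congrArg Units.val hdet), h⟩

/-- The orbits of the diagonal action of `SO(q)` on `Q × Q`, where `Q ⊂ ℙ(k^{n+2})` is the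
smooth projective quadric `{q = 0}`, are exactly the diagonal `Δ`, `T ∖ Δ` and
`(Q × Q) ∖ T`, where `T = {([x],[y]) ∈ Q × Q | B_q(x,y) = 0}`. -/
theorem stmt1 (k : Type*) [Field k] [IsAlgClosed k] [CharZero k]
    (n : ℕ) (hn : 3 ≤ n)
    (q : QuadraticForm k (Fin (n + 2) → k))
    (hq : ∀ v, (∀ w, polar q v w = 0) → v = 0)
    (Qs : Set (Projectivization k (Fin (n + 2) → k)))
    (hQs : Qs = {p | q p.rep = 0})
    (Δ T : Set (Projectivization k (Fin (n + 2) → k) × Projectivization k (Fin (n + 2) → k)))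
    (hΔ : Δ = {z | z.1 ∈ Qs ∧ z.1 = z.2})
    (hT : T = {z | z.1 ∈ Qs ∧ z.2 ∈ Qs ∧ polar q z.1.rep z.2.rep = 0}) :
    Δ ⊆ T ∧
    (∀ z ∈ Δ, pairOrbit q z = Δ) ∧
    (∀ z ∈ T \ Δ, pairOrbit q z = T \ Δ) ∧
    (∀ z ∈ (Qs ×ˢ Qs) \ T, pairOrbit q z = (Qs ×ˢ Qs) \ T) ∧
    Qs ×ˢ Qs = Δ ∪ (T \ Δ) ∪ ((Qs ×ˢ Qs) \ T) := by
  subst hQs hΔ hT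
  simp only [pairOrbit_eq_orbit]
  exact stmt1_general ((polarBilin_isRefl q).nondegenerate_iff_separatingLeft.2 hq)
    (by rw [finrank_fin_fun]; lia)
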